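/- (Plancherel formula for the affine group.) For every smooth compactly supported f : ℝ² → ℂ: 2π ∫∫_{ℝ²} e^{a} |f(a,b)|² da db = ∑_{ν ∈ {−1,+1}} ∫∫_{ℝ²} e^{-u} |f̃(u−s, ν e^{-s})|² ds du, where f̃(a,β) := e^{a} ∫_ℝ f(a,b) e^{ibβ} db. Equivalently, the L² norm of f with respect to the left Haar measure e^{a} da db equals the sum over ν = ±1 of the Hilbert–Schmidt norms of the integral kernels e^{-u/2} f̃(u−s, ν e^{-s}). -/

import Mathlib

open MeasureTheory

/-- The partial Fourier transform `f̃(a,β) := e^{a} ∫ f(a,b) e^{ibβ} db`. -/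
noncomputable def tildeT (f : ℝ × ℝ → ℂ) : ℝ × ℝ → ℂ := fun p =>
  Real.exp p.1 • ∫ b : ℝ, f (p.1, b) * Complex.exp (Complex.I * b * p.2)

/-!
For fixed `a`, the Plancherel theorem on the line gives
`∫ |f̃(a,β)|² dβ = 2π e^{2a} ∫ |f(a,b)|² db`, so the left-hand side of the formula is
`∫∫ e^{-a} |f̃(a,β)|² da dβ`. The substitution `a = u - s`, `β = ν e^{-s}` has Jacobian `e^{-s}` and
maps the plane onto the half-plane where `β` has the sign `ν`; it turns the weight `e^{-a}` into
`e^{-u}`, and the two signs together cover the plane up to the line `β = 0`.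
-/

open scoped FourierTransform SchwartzMap InnerProductSpace ContDiff

section Plancherel

variable {E F : Type*} [NormedAddCommGroup E] [InnerProductSpace ℝ E] [FiniteDimensional ℝ E]
  [MeasurableSpace E] [BorelSpace E]
  [NormedAddCommGroup F] [InnerProductSpace ℂ F]

theorem integral_norm_sq_eq_norm_toLp_sq {α : Type*} [MeasurableSpace α] {μ : Measure α}
    {g : α → F} (hg : MemLp g 2 μ) : ∫ x, ‖g x‖ ^ 2 ∂μ = ‖hg.toLp g‖ ^ 2 := by
  have h : ∫ x, ⟪hg.toLp g x, hg.toLp g x⟫_ℂ ∂μ = ∫ x, ⟪g x, g x⟫_ℂ ∂μ :=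
    integral_congr_ae (hg.coeFn_toLp.mono fun x hx => by simp only [hx])
  rw [← L2.inner_def] at h
  simp only [inner_self_eq_norm_sq_to_K, ← RCLike.ofReal_pow, integral_ofReal] at h
  exact_mod_cast h.symm

variable [CompleteSpace F] {f : E → F}

theorem fourier_toLp_ae_eq (hf₁ : Integrable f) (hf₂ : MemLp f 2) :
    (𝓕 (hf₂.toLp f) : Lp F 2 (volume : Measure E)) =ᵐ[volume] 𝓕 f := by
  refine ae_eq_of_integral_contDiff_smul_eq ((Lp.memLp _).locallyIntegrable one_le_two)
    (VectorFourier.fourierIntegral_continuous Real.continuous_fourierChar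
      continuous_inner hf₁).locallyIntegrable fun g hg hg' => ?_
  have hφ : HasCompactSupport (Complex.ofRealCLM ∘ g) := hg'.comp_left rfl
  set φ : 𝓢(E, ℂ) := hφ.toSchwartzMap (by fun_prop)
  have self_adjoint : ∫ ξ, 𝓕 φ ξ • f ξ = ∫ x, φ x • 𝓕 f x := by
    rw [SchwartzMap.fourier_coe]
    simpa using! VectorFourier.integral_fourierIntegral_smul_eq_flip (L := innerₗ E)
      Real.continuous_fourierChar continuous_inner φ.integrable hf₁
  calc ∫ x, g x • (𝓕 (hf₂.toLp f) : Lp F 2 volume) x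
      = Lp.toTemperedDistribution (𝓕 (hf₂.toLp f) : Lp F 2 volume) φ := by
        simp [φ]
    _ = ∫ ξ, 𝓕 φ ξ • hf₂.toLp f ξ := by
        rw [← Lp.fourier_toTemperedDistribution_eq, TemperedDistribution.fourier_apply,
          Lp.toTemperedDistribution_apply]
    _ = ∫ ξ, 𝓕 φ ξ • f ξ :=
        integral_congr_ae (hf₂.coeFn_toLp.mono fun ξ hξ => congrArg (𝓕 φ ξ • ·) hξ)
    _ = ∫ x, φ x • 𝓕 f x := self_adjoint
    _ = ∫ x, g x • 𝓕 f x := by simp [φ]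

theorem memLp_two_fourier (hf₁ : Integrable f) (hf₂ : MemLp f 2) : MemLp (𝓕 f) 2 :=
  (memLp_congr_ae (fourier_toLp_ae_eq hf₁ hf₂)).mp (Lp.memLp _)

theorem integral_norm_sq_fourier (hf₁ : Integrable f) (hf₂ : MemLp f 2) :
    ∫ ξ, ‖𝓕 f ξ‖ ^ 2 = ∫ x, ‖f x‖ ^ 2 := by
  have h : (memLp_two_fourier hf₁ hf₂).toLp (𝓕 f) = 𝓕 (hf₂.toLp f) :=
    Lp.ext ((MemLp.coeFn_toLp _).trans (fourier_toLp_ae_eq hf₁ hf₂).symm)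
  rw [integral_norm_sq_eq_norm_toLp_sq (memLp_two_fourier hf₁ hf₂),
    integral_norm_sq_eq_norm_toLp_sq hf₂, h, Lp.norm_fourier_eq]

end Plancherel

section TildeT

variable {f : ℝ × ℝ → ℂ} {a : ℝ}

theorem tildeT_eq_exp_smul_fourier (f : ℝ × ℝ → ℂ) (a β : ℝ) :
    tildeT f (a, β) = Real.exp a • 𝓕 (fun b => f (a, b)) (-(2 * Real.pi)⁻¹ * β) := by
  rw [tildeT, Real.fourier_real_eq_integral_exp_smul]
  congr! 3 with b
  rw [smul_eq_mul, mul_comm]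
  congr 2
  push_cast
  have : (Real.pi : ℂ) ≠ 0 := by exact_mod_cast Real.pi_ne_zero
  field_simp

theorem norm_sq_tildeT (f : ℝ × ℝ → ℂ) (a β : ℝ) :
    ‖tildeT f (a, β)‖ ^ 2
      = Real.exp a ^ 2 * ‖𝓕 (fun b => f (a, b)) (-(2 * Real.pi)⁻¹ * β)‖ ^ 2 := by
  rw [tildeT_eq_exp_smul_fourier, norm_smul, Real.norm_of_nonneg (Real.exp_pos a).le, mul_pow]

theorem integrable_norm_sq_tildeT (hf₁ : Integrable fun b => f (a, b))
    (hf₂ : MemLp (fun b => f (a, b)) 2) : Integrable fun β => ‖tildeT f (a, β)‖ ^ 2 := by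
  have h : Integrable fun ξ => ‖𝓕 (fun b => f (a, b)) ξ‖ ^ 2 :=
    (memLp_two_fourier hf₁ hf₂).integrable_norm_pow two_ne_zero
  simp_rw [norm_sq_tildeT]
  exact (h.comp_mul_left' (by simp [Real.pi_ne_zero])).const_mul _

theorem integral_norm_sq_tildeT (hf₁ : Integrable fun b => f (a, b))
    (hf₂ : MemLp (fun b => f (a, b)) 2) :
    ∫ β, ‖tildeT f (a, β)‖ ^ 2 = 2 * Real.pi * Real.exp a ^ 2 * ∫ b, ‖f (a, b)‖ ^ 2 := by
  simp_rw [norm_sq_tildeT]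
  rw [integral_const_mul,
    Measure.integral_comp_mul_left (fun ξ => ‖𝓕 (fun b => f (a, b)) ξ‖ ^ 2),
    integral_norm_sq_fourier hf₁ hf₂, inv_neg, inv_inv, abs_neg, abs_of_pos Real.two_pi_pos,
    smul_eq_mul]
  ring

theorem aestronglyMeasurable_tildeT (hf : AEStronglyMeasurable f) :
    AEStronglyMeasurable (tildeT f) := by
  have h : AEStronglyMeasurable (fun q : (ℝ × ℝ) × ℝ => f (q.1.1, q.2))
      ((volume : Measure (ℝ × ℝ)).prod volume) :=
    hf.comp_quasiMeasurePreserving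
      (QuasiMeasurePreserving.prodMap Measure.quasiMeasurePreserving_fst (.id volume))
  have hexp : Continuous fun q : (ℝ × ℝ) × ℝ => Complex.exp (Complex.I * q.2 * q.1.2) := by
    fun_prop
  exact (Real.continuous_exp.comp continuous_fst).aestronglyMeasurable.smul
    (h.mul hexp.aestronglyMeasurable).integral_prod_right'

variable (hf : AEStronglyMeasurable f) (hf₁ : ∀ᵐ a : ℝ, Integrable fun b => f (a, b))
  (hf₂ : Integrable fun p : ℝ × ℝ => Real.exp p.1 * ‖f p‖ ^ 2)

include hf hf₂ in
theorem ae_memLp_two_slice : ∀ᵐ a : ℝ, MemLp (fun b => f (a, b)) 2 := by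
  filter_upwards [hf.prodMk_left, hf₂.prod_right_ae] with a hmeas hint
  refine (memLp_two_iff_integrable_sq_norm hmeas).mpr ?_
  simpa [integrable_const_mul_iff, (Real.exp_pos a).ne'] using hint

include hf hf₁ hf₂

theorem ae_integral_exp_neg_mul_norm_sq_tildeT :
    ∀ᵐ a : ℝ, ∫ β, Real.exp (-a) * ‖tildeT f (a, β)‖ ^ 2
      = 2 * Real.pi * ∫ b, Real.exp a * ‖f (a, b)‖ ^ 2 := by
  filter_upwards [hf₁, ae_memLp_two_slice hf hf₂] with a h₁ h₂
  rw [integral_const_mul, integral_const_mul, integral_norm_sq_tildeT h₁ h₂, Real.exp_neg]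
  field_simp

theorem integrable_exp_neg_mul_norm_sq_tildeT :
    Integrable fun p : ℝ × ℝ => Real.exp (-p.1) * ‖tildeT f p‖ ^ 2 := by
  have hmeas : AEStronglyMeasurable fun p : ℝ × ℝ => Real.exp (-p.1) * ‖tildeT f p‖ ^ 2 :=
    Continuous.aestronglyMeasurable (by fun_prop) |>.mul
      ((aestronglyMeasurable_tildeT hf).norm.pow 2)
  refine (integrable_prod_iff hmeas).mpr ⟨?_, ?_⟩
  · filter_upwards [hf₁, ae_memLp_two_slice hf hf₂] with a h₁ h₂
    exact (integrable_norm_sq_tildeT h₁ h₂).const_mul _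
  · refine (hf₂.integral_prod_left.const_mul (2 * Real.pi)).congr ?_
    filter_upwards [ae_integral_exp_neg_mul_norm_sq_tildeT hf hf₁ hf₂] with a ha
    simpa using ha.symm

theorem integral_exp_neg_mul_norm_sq_tildeT :
    ∫ p : ℝ × ℝ, Real.exp (-p.1) * ‖tildeT f p‖ ^ 2
      = 2 * Real.pi * ∫ p : ℝ × ℝ, Real.exp p.1 * ‖f p‖ ^ 2 := by
  rw [Measure.volume_eq_prod,
    integral_prod _ (integrable_exp_neg_mul_norm_sq_tildeT hf hf₁ hf₂), integral_prod _ hf₂,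
    ← integral_const_mul]
  exact integral_congr_ae (ae_integral_exp_neg_mul_norm_sq_tildeT hf hf₁ hf₂)

end TildeT

/-- The change of variables `(s, u) ↦ (a, β) = (u - s, ν e^{-s})`, through which the kernel
`e^{-u/2} f̃(u - s, ν e^{-s})` samples `f̃`. -/
noncomputable def kernelCoord (ν : ℝ) (p : ℝ × ℝ) : ℝ × ℝ :=
  (p.2 - p.1, ν * Real.exp (-p.1))

namespace kernelCoord

/-- The derivative of `kernelCoord ν` at `p`. -/
noncomputable def fderiv (ν : ℝ) (p : ℝ × ℝ) : ℝ × ℝ →L[ℝ] ℝ × ℝ :=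
  (Matrix.toLin (.finTwoProd ℝ) (.finTwoProd ℝ)
    !![-1, 1; -(ν * Real.exp (-p.1)), 0]).toContinuousLinearMap

theorem hasFDerivAt (ν : ℝ) (p : ℝ × ℝ) : HasFDerivAt (kernelCoord ν) (fderiv ν p) p := by
  rw [fderiv, Matrix.toLin_finTwoProd_toContinuousLinearMap]
  convert! HasFDerivAt.prodMk (𝕜 := ℝ) (hasFDerivAt_snd.sub hasFDerivAt_fst)
    (((hasDerivAt_neg p.1).exp.const_mul ν).comp_hasFDerivAt p hasFDerivAt_fst) using 2 <;>
  simp [neg_smul _ (ContinuousLinearMap.fst ℝ ℝ ℝ), sub_eq_neg_add]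

theorem abs_det_fderiv (ν : ℝ) (p : ℝ × ℝ) :
    |(fderiv ν p).det| = |ν| * Real.exp (-p.1) := by
  simp [fderiv, ContinuousLinearMap.det, LinearMap.det_toLin, Matrix.det_fin_two, abs_mul]

variable {ν : ℝ}

theorem injective (hν : ν ≠ 0) : Function.Injective (kernelCoord ν) := by
  rintro ⟨s, u⟩ ⟨s', u'⟩ h
  obtain ⟨hsub, hexp⟩ := Prod.mk.inj h
  have hs : s = s' := by simpa [hν] using hexp
  exact Prod.ext hs (by simpa [hs] using hsub)

theorem range_eq (hν : ν ≠ 0) :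
    Set.range (kernelCoord ν) = {q | 0 < q.2 / ν} := by
  apply Set.Subset.antisymm
  · rintro _ ⟨p, rfl⟩
    simpa [kernelCoord, hν] using Real.exp_pos _
  · rintro ⟨a, β⟩ (hβ : 0 < β / ν)
    refine ⟨(-Real.log (β / ν), a - Real.log (β / ν)), ?_⟩
    simp [kernelCoord, Real.exp_log hβ, mul_div_cancel₀, hν]

variable {E : Type*} [NormedAddCommGroup E] [NormedSpace ℝ E]

theorem integral_comp (hν : ν ≠ 0) (G : ℝ × ℝ → E) :
    ∫ p, (|ν| * Real.exp (-p.1)) • G (kernelCoord ν p)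
      = ∫ q in {q | 0 < q.2 / ν}, G q := by
  have h := integral_image_eq_integral_abs_det_fderiv_smul volume MeasurableSet.univ
    (fun p _ => (hasFDerivAt ν p).hasFDerivWithinAt) (injective hν).injOn G
  simpa only [Set.image_univ, range_eq hν, abs_det_fderiv, setIntegral_univ] using h.symm

theorem integral_comp_neg_one_add_integral_comp_one {G : ℝ × ℝ → E} (hG : Integrable G) :
    (∫ p, Real.exp (-p.1) • G (kernelCoord (-1) p)) + ∫ p, Real.exp (-p.1) • G (kernelCoord 1 p)
      = ∫ q, G q := by
  have hneg : (∫ p, Real.exp (-p.1) • G (kernelCoord (-1) p)) = ∫ q in {q | q.2 < 0}, G q := by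
    simpa [div_neg] using integral_comp (neg_ne_zero.mpr one_ne_zero) G
  have hpos : (∫ p, Real.exp (-p.1) • G (kernelCoord 1 p)) = ∫ q in {q | 0 < q.2}, G q := by
    simpa using integral_comp one_ne_zero G
  have hcompl : {q : ℝ × ℝ | 0 < q.2} =ᵐ[volume] ({q : ℝ × ℝ | q.2 < 0}ᶜ : Set (ℝ × ℝ)) := by
    simpa [Set.compl_def] using! Measure.quasiMeasurePreserving_snd.preimage_ae_eq
      (Ioi_ae_eq_Ici (μ := volume) (a := (0 : ℝ)))
  rw [hneg, hpos, setIntegral_congr_set hcompl,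
    integral_add_compl (measurableSet_lt measurable_snd measurable_const) hG]

end kernelCoord

theorem integrable_exp_mul_norm_sq {f : ℝ × ℝ → ℂ} (hf : Continuous f)
    (hf' : HasCompactSupport f) : Integrable fun p : ℝ × ℝ => Real.exp p.1 * ‖f p‖ ^ 2 := by
  refine Continuous.integrable_of_hasCompactSupport (by fun_prop) ?_
  exact (hf'.comp_left (g := fun z => ‖z‖ ^ 2) (by simp)).mul_left

theorem stmt_14_general (f : ℝ × ℝ → ℂ) (hf : AEStronglyMeasurable f)
    (hf₁ : ∀ᵐ a : ℝ, Integrable fun b => f (a, b))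
    (hf₂ : Integrable fun p : ℝ × ℝ => Real.exp p.1 * ‖f p‖ ^ 2) :
    2 * Real.pi * ∫ p : ℝ × ℝ, Real.exp p.1 * ‖f p‖ ^ 2
      = (∫ p : ℝ × ℝ, Real.exp (-p.2) *
            ‖tildeT f (p.2 - p.1, -1 * Real.exp (-p.1))‖ ^ 2) +
        (∫ p : ℝ × ℝ, Real.exp (-p.2) *
            ‖tildeT f (p.2 - p.1, 1 * Real.exp (-p.1))‖ ^ 2) := by
  have weight (p : ℝ × ℝ) : Real.exp (-p.2) = Real.exp (-p.1) * Real.exp (-(p.2 - p.1)) := by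
    rw [← Real.exp_add]
    ring_nf
  simp only [weight, mul_assoc (Real.exp _)]
  rw [← integral_exp_neg_mul_norm_sq_tildeT hf hf₁ hf₂,
    ← kernelCoord.integral_comp_neg_one_add_integral_comp_one
      (integrable_exp_neg_mul_norm_sq_tildeT hf hf₁ hf₂)]
  rfl

/-- Plancherel formula for the affine group: for `f` smooth and compactly supported,
`2π ∫∫ e^{a} |f(a,b)|² da db = ∑_{ν=±1} ∫∫ e^{-u} |f̃(u−s, ν e^{-s})|² ds du`. -/
theorem stmt_14 (f : ℝ × ℝ → ℂ) (hf : ContDiff ℝ (⊤ : ℕ∞) f) (hf' : HasCompactSupport f) :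
    2 * Real.pi * ∫ p : ℝ × ℝ, Real.exp p.1 * ‖f p‖ ^ 2
      = (∫ p : ℝ × ℝ, Real.exp (-p.2) *
            ‖tildeT f (p.2 - p.1, -1 * Real.exp (-p.1))‖ ^ 2) +
        (∫ p : ℝ × ℝ, Real.exp (-p.2) *
            ‖tildeT f (p.2 - p.1, 1 * Real.exp (-p.1))‖ ^ 2) :=
  stmt_14_general f hf.continuous.aestronglyMeasurable
    (hf.continuous.integrable_of_hasCompactSupport hf').prod_right_ae
    (integrable_exp_mul_norm_sq hf.continuous hf')
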